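/- The commutant of the tensor square of the fundamental 5-dimensional representation of the classical Poincaré group is 3-dimensional: the set of matrices W ∈ M₂₅(ℂ) satisfying W·(ρ(g,a) ⊗ ρ(g,a)) = (ρ(g,a) ⊗ ρ(g,a))·W for all g ∈ SL(2,ℂ) and all a ∈ ℝ⁴ is exactly the linear span of the three linearly independent matrices 1₂₅, τ₅, and m_P. -/

import Mathlib

open Matrix Complex

noncomputable section

/-- The Pauli matrices σ₀, σ₁, σ₂, σ₃. -/
def pauli : Fin 4 → Matrix (Fin 2) (Fin 2) ℂ :=
  ![!![1, 0; 0, 1], !![0, 1; 1, 0], !![0, -I; I, 0], !![1, 0; 0, -1]]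

/-- `Λ` is the matrix λ_g associated with `g`:
`Σ_i (Λ x)_i σ_i = g (Σ_j x_j σ_j) g*` for all `x ∈ ℝ⁴`. -/
def IsLorentzPair (g : Matrix (Fin 2) (Fin 2) ℂ) (Λ : Matrix (Fin 4) (Fin 4) ℝ) : Prop :=
  ∀ x : Fin 4 → ℝ,
    ∑ i, ((Λ.mulVec x i : ℝ) : ℂ) • pauli i
      = g * (∑ j, ((x j : ℝ) : ℂ) • pauli j) * gᴴ

/-- Kronecker product of `Fin`-indexed matrices, with the standard (lexicographic)
Kronecker ordering of indices. -/
def kron {m n p q : ℕ} (A : Matrix (Fin m) (Fin n) ℂ) (B : Matrix (Fin p) (Fin q) ℂ) :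
    Matrix (Fin (m * p)) (Fin (n * q)) ℂ :=
  Matrix.of fun i j => A i.divNat j.divNat * B i.modNat j.modNat

/-- The flip matrix τ₅ on ℂ⁵⊗ℂ⁵ ≅ ℂ²⁵ determined by τ₅(u⊗v) = v⊗u. -/
def tau5 : Matrix (Fin (5 * 5)) (Fin (5 * 5)) ℂ :=
  Matrix.of fun i j => if i.divNat = j.modNat ∧ i.modNat = j.divNat then 1 else 0

/-- The Minkowski metric η padded to a 5×5 matrix (zeros in the last row and column). -/
def eta5 : Matrix (Fin 5) (Fin 5) ℂ :=
  Matrix.of fun i j =>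
    if i = j then (if i = (4 : Fin 5) then 0 else if i = 0 then 1 else -1) else 0

/-- The vector `m̂ = Σ_{i,j=1}^{4} η_{ij} e_i ⊗ e_j ∈ ℂ⁵⊗ℂ⁵`. -/
def mhat : Fin (5 * 5) → ℂ := fun p => eta5 p.divNat p.modNat

/-- The rank-one matrix `m_P = m̂·(e₅⊗e₅)ᵀ`. -/
def mP : Matrix (Fin (5 * 5)) (Fin (5 * 5)) ℂ :=
  Matrix.of fun p q =>
    mhat p * (if q.divNat = (4 : Fin 5) ∧ q.modNat = (4 : Fin 5) then 1 else 0)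

/-- The fundamental 5-dimensional representation `ρ(g,a) = [[λ_g, a],[0,1]]` of the
classical Poincaré group. -/
def rho5 (Λ : Matrix (Fin 4) (Fin 4) ℝ) (a : Fin 4 → ℝ) : Matrix (Fin 5) (Fin 5) ℂ :=
  Matrix.reindex finSumFinEquiv finSumFinEquiv
    (Matrix.fromBlocks (Λ.map (fun r => (r : ℂ)))
      (Matrix.of fun i (_ : Fin 1) => ((a i : ℝ) : ℂ))
      (0 : Matrix (Fin 1) (Fin 4) ℂ) (1 : Matrix (Fin 1) (Fin 1) ℂ))

/-- Pair index. -/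
def pr (i j : Fin 5) : Fin (5 * 5) := finProdFinEquiv (i, j)

lemma pr_div (i j : Fin 5) : (pr i j).divNat = i :=
  congrArg Prod.fst (finProdFinEquiv.symm_apply_apply (i, j))

lemma pr_mod (i j : Fin 5) : (pr i j).modNat = j :=
  congrArg Prod.snd (finProdFinEquiv.symm_apply_apply (i, j))

lemma pr_surj (p : Fin (5 * 5)) : ∃ i j, p = pr i j :=
  ⟨p.divNat, p.modNat, (finProdFinEquiv.apply_symm_apply p).symm⟩

lemma pr_inj (i j k l : Fin 5) : pr i j = pr k l ↔ i = k ∧ j = l := by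
  unfold pr
  rw [finProdFinEquiv.injective.eq_iff, Prod.mk.injEq]

lemma sum_pr (f : Fin (5 * 5) → ℂ) : ∑ p, f p = ∑ i, ∑ j, f (pr i j) := by
  rw [← Equiv.sum_comp finProdFinEquiv f, Fintype.sum_prod_type]
  rfl

lemma comm_iff (W : Matrix (Fin (5 * 5)) (Fin (5 * 5)) ℂ) (R : Matrix (Fin 5) (Fin 5) ℂ) :
    W * kron R R = kron R R * W ↔ ∀ i j k l,
      ∑ m, ∑ n, W (pr i j) (pr m n) * (R m k * R n l)
        = ∑ m, ∑ n, R i m * R j n * W (pr m n) (pr k l) := by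
  constructor
  · intro h i j k l
    have := congrFun (congrFun h (pr i j)) (pr k l)
    simpa only [Matrix.mul_apply, sum_pr, kron, Matrix.of_apply, pr_div, pr_mod] using this
  · intro h
    ext p q
    obtain ⟨i, j, rfl⟩ := pr_surj p
    obtain ⟨k, l, rfl⟩ := pr_surj q
    simpa only [Matrix.mul_apply, sum_pr, kron, Matrix.of_apply, pr_div, pr_mod] using h i j k l

lemma rho5_cc (Λ a) (i j : Fin 4) : rho5 Λ a i.castSucc j.castSucc = (Λ i j : ℂ) := by
  have h : ∀ i : Fin 4, finSumFinEquiv.symm (i.castSucc : Fin (4 + 1)) = Sum.inl i :=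
    fun i => finSumFinEquiv_symm_apply_castAdd i
  simp [rho5, h]

lemma rho5_cl (Λ a) (i : Fin 4) : rho5 Λ a i.castSucc 4 = (a i : ℂ) := by
  have h : ∀ i : Fin 4, finSumFinEquiv.symm (i.castSucc : Fin (4 + 1)) = Sum.inl i :=
    fun i => finSumFinEquiv_symm_apply_castAdd i
  have h4 : finSumFinEquiv.symm (4 : Fin (4 + 1)) = Sum.inr 0 :=
    finSumFinEquiv_symm_apply_natAdd (m := 4) (0 : Fin 1)
  simp [rho5, h, h4]

lemma rho5_lc (Λ a) (i : Fin 4) : rho5 Λ a 4 i.castSucc = 0 := by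
  have h : ∀ i : Fin 4, finSumFinEquiv.symm (i.castSucc : Fin (4 + 1)) = Sum.inl i :=
    fun i => finSumFinEquiv_symm_apply_castAdd i
  have h4 : finSumFinEquiv.symm (4 : Fin (4 + 1)) = Sum.inr 0 :=
    finSumFinEquiv_symm_apply_natAdd (m := 4) (0 : Fin 1)
  simp [rho5, h, h4]

lemma rho5_ll (Λ a) : rho5 Λ a 4 4 = 1 := by
  have h4 : finSumFinEquiv.symm (4 : Fin (4 + 1)) = Sum.inr 0 :=
    finSumFinEquiv_symm_apply_natAdd (m := 4) (0 : Fin 1)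
  simp [rho5, h4]

/-- The 5×5 matrix in explicit form. -/
lemma rho5_eq (Λ : Matrix (Fin 4) (Fin 4) ℝ) (a : Fin 4 → ℝ) :
    rho5 Λ a = !![(Λ 0 0 : ℂ), Λ 0 1, Λ 0 2, Λ 0 3, a 0; Λ 1 0, Λ 1 1, Λ 1 2, Λ 1 3, a 1;
      Λ 2 0, Λ 2 1, Λ 2 2, Λ 2 3, a 2; Λ 3 0, Λ 3 1, Λ 3 2, Λ 3 3, a 3; 0, 0, 0, 0, 1] := by
  ext i j
  refine Fin.lastCases ?_ (fun i => ?_) i <;> refine Fin.lastCases ?_ (fun j => ?_) j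
  · exact rho5_ll Λ a
  · refine (rho5_lc Λ a j).trans ?_
    fin_cases j <;> rfl
  · refine (rho5_cl Λ a i).trans ?_
    fin_cases i <;> rfl
  · refine (rho5_cc Λ a i j).trans ?_
    fin_cases i <;> fin_cases j <;> rfl

lemma lorentz_det {g Λ} (hg : g.det = 1) (h : IsLorentzPair g Λ) (x : Fin 4 → ℝ) :
    (Λ.mulVec x 0) ^ 2 - (Λ.mulVec x 1) ^ 2 - (Λ.mulVec x 2) ^ 2 - (Λ.mulVec x 3) ^ 2
      = x 0 ^ 2 - x 1 ^ 2 - x 2 ^ 2 - x 3 ^ 2 := by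
  have key : ∀ y : Fin 4 → ℝ, (∑ j, ((y j : ℝ) : ℂ) • pauli j).det
      = ((y 0 ^ 2 - y 1 ^ 2 - y 2 ^ 2 - y 3 ^ 2 : ℝ) : ℂ) := by
    intro y
    simp [Fin.sum_univ_four, pauli, Matrix.det_fin_two]
    linear_combination (y 2 : ℂ) ^ 2 * Complex.I_sq
  have h1 := congrArg Matrix.det (h x)
  rw [Matrix.det_mul, Matrix.det_mul, Matrix.det_conjTranspose, hg, key, key] at h1
  simp only [star_one, one_mul, mul_one] at h1
  exact_mod_cast h1

/-- The Minkowski metric. -/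
def eta4 : Matrix (Fin 4) (Fin 4) ℝ := Matrix.diagonal ![1, -1, -1, -1]

lemma lorentz_eta {g Λ} (hg : g.det = 1) (h : IsLorentzPair g Λ) :
    Λ * eta4 * Λᵀ = eta4 := by
  have q := lorentz_det hg h
  have h1 : Λᵀ * eta4 * Λ = eta4 := by
    have e : ∀ i, Λ 0 i ^ 2 - Λ 1 i ^ 2 - Λ 2 i ^ 2 - Λ 3 i ^ 2 = eta4 i i := by
      intro i
      have := q (Pi.single i 1)
      simp only [Matrix.mulVec_single_one, Matrix.col_apply] at this
      rw [this]
      fin_cases i <;> simp [eta4]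
    have e2 : ∀ i j, Λ 0 i * Λ 0 j - Λ 1 i * Λ 1 j - Λ 2 i * Λ 2 j - Λ 3 i * Λ 3 j
        = eta4 i j := by
      intro i j
      by_cases hij : i = j
      · subst hij
        rw [← e]; ring
      have h0 : eta4 i j = 0 := by simp [eta4, hij]
      have h3 := q (Pi.single i 1 + Pi.single j 1)
      simp only [Matrix.mulVec_add, Matrix.mulVec_single_one, Pi.add_apply,
        Matrix.col_apply] at h3
      have h4 : (Pi.single i (1:ℝ) + Pi.single j 1 : Fin 4 → ℝ) 0 ^ 2
        - (Pi.single i (1:ℝ) + Pi.single j 1 : Fin 4 → ℝ) 1 ^ 2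
        - (Pi.single i (1:ℝ) + Pi.single j 1 : Fin 4 → ℝ) 2 ^ 2
        - (Pi.single i (1:ℝ) + Pi.single j 1 : Fin 4 → ℝ) 3 ^ 2 = eta4 i i + eta4 j j := by
        fin_cases i <;> fin_cases j <;> first | exact absurd rfl hij | norm_num [eta4, Pi.single_apply, Fin.ext_iff]
      simp only [Pi.add_apply] at h4
      rw [h0]
      linear_combination (h3 + h4 - e i - e j) / 2
    ext i j
    rw [← e2 i j]
    simp [Matrix.mul_apply, eta4, Matrix.mul_diagonal, Fin.sum_univ_four]
    ring
  have hee : eta4 * eta4 = 1 := by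
    ext i j
    fin_cases i <;> fin_cases j <;> simp [eta4]
  have h2 : (eta4 * Λᵀ * eta4) * Λ = 1 := by
    rw [Matrix.mul_assoc, Matrix.mul_assoc, ← Matrix.mul_assoc Λᵀ, h1, hee]
  have h3 := mul_eq_one_comm.mp h2
  calc Λ * eta4 * Λᵀ = Λ * (eta4 * Λᵀ * eta4) * eta4 := by
        simp only [Matrix.mul_assoc, hee, Matrix.mul_one]
    _ = eta4 := by rw [h3, Matrix.one_mul]

lemma rho5_eta {g Λ} (hg : g.det = 1) (h : IsLorentzPair g Λ) (a) (i j : Fin 5) :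
    ∑ m, ∑ n, rho5 Λ a i m * rho5 Λ a j n * eta5 m n = eta5 i j := by
  have h1 := lorentz_eta hg h
  have h2 : ∀ i j : Fin 4, (Λ i 0 * Λ j 0 - Λ i 1 * Λ j 1 - Λ i 2 * Λ j 2 - Λ i 3 * Λ j 3 : ℂ)
      = eta4 i j := by
    intro i j
    rw [← h1]
    simp [Matrix.mul_apply, eta4, Matrix.mul_diagonal, Fin.sum_univ_four]
    ring
  have h3 : ∀ m n : Fin 4, eta5 m.castSucc n.castSucc = eta4 m n := by
    intro m n
    fin_cases m <;> fin_cases n <;> simp [eta5, eta4]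
  have h4 : ∀ m, eta5 m 4 = 0 := by intro m; simp [eta5]; tauto
  have h5 : ∀ m, eta5 4 m = 0 := by intro m; simp [eta5]
  have h6 : ∑ m, ∑ n, rho5 Λ a i m * rho5 Λ a j n * eta5 m n
     = rho5 Λ a i 0 * rho5 Λ a j 0 - rho5 Λ a i 1 * rho5 Λ a j 1
      - rho5 Λ a i 2 * rho5 Λ a j 2 - rho5 Λ a i 3 * rho5 Λ a j 3 := by
    simp [Fin.sum_univ_five, eta5]
    ring
  rw [h6]
  have c : ∀ i, rho5 Λ a 4 (Fin.castSucc i) = 0 := rho5_lc Λ a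
  have c0 := c 0
  have c1 := c 1
  have c2 := c 2
  have c3 := c 3
  simp only [Fin.castSucc_zero, Fin.castSucc_one] at c0 c1
  change rho5 Λ a 4 2 = 0 at c2
  change rho5 Λ a 4 3 = 0 at c3
  refine Fin.lastCases ?_ (fun i => ?_) i
  · change rho5 Λ a 4 0 * rho5 Λ a j 0 - rho5 Λ a 4 1 * rho5 Λ a j 1
      - rho5 Λ a 4 2 * rho5 Λ a j 2 - rho5 Λ a 4 3 * rho5 Λ a j 3 = eta5 4 j
    rw [c0, c1, c2, c3, h5]; ring
  · refine Fin.lastCases ?_ (fun j => ?_) j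
    · change rho5 Λ a _ 0 * rho5 Λ a 4 0 - rho5 Λ a _ 1 * rho5 Λ a 4 1
        - rho5 Λ a _ 2 * rho5 Λ a 4 2 - rho5 Λ a _ 3 * rho5 Λ a 4 3 = eta5 _ 4
      rw [c0, c1, c2, c3, h4]; ring
    · rw [h3, ← h2]
      simp only [← rho5_cc Λ a]
      rfl

lemma one_pr (i j k l : Fin 5) : (1 : Matrix (Fin (5 * 5)) (Fin (5 * 5)) ℂ) (pr i j) (pr k l)
    = if i = k ∧ j = l then 1 else 0 := by
  simp only [Matrix.one_apply, pr_inj]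

lemma tau_pr (i j k l : Fin 5) : tau5 (pr i j) (pr k l)
    = if i = l ∧ j = k then 1 else 0 := by
  simp only [tau5, Matrix.of_apply, pr_div, pr_mod]

lemma mP_pr (i j k l : Fin 5) : mP (pr i j) (pr k l)
    = eta5 i j * if k = 4 ∧ l = 4 then 1 else 0 := by
  simp only [mP, mhat, Matrix.of_apply, pr_div, pr_mod]

lemma tau_comm (R : Matrix (Fin 5) (Fin 5) ℂ) : tau5 * kron R R = kron R R * tau5 := by
  rw [comm_iff]
  intro i j k l
  simp only [tau_pr, ite_and, ite_mul, mul_ite, one_mul, zero_mul, mul_one, mul_zero]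
  simp
  ring

lemma mP_comm {g Λ} (hg : g.det = 1) (h : IsLorentzPair g Λ) (a) :
    mP * kron (rho5 Λ a) (rho5 Λ a) = kron (rho5 Λ a) (rho5 Λ a) * mP := by
  rw [comm_iff]
  intro i j k l
  simp only [mP_pr, ← mul_assoc, ← Finset.sum_mul, rho5_eta hg h]
  have c : ∀ i, rho5 Λ a 4 i = if i = 4 then 1 else 0 := by
    intro i
    rw [rho5_eq]
    fin_cases i <;> simp
  simp only [ite_and, ite_mul, mul_ite, one_mul, zero_mul, mul_one, mul_zero]
  simp
  simp only [c]
  split_ifs <;> simp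

lemma pair_one : IsLorentzPair 1 1 := by
  intro x; simp


/-- The last index. -/
def L5 : Fin 5 := Fin.last 4

@[elab_as_elim]
lemma five_cases {p : Fin 5 → Prop} (h : p L5) (h' : ∀ i : Fin 4, p i.castSucc) (i : Fin 5) : p i :=
  Fin.lastCases h h' i

lemma L5_ne (i : Fin 4) : L5 ≠ i.castSucc := (Fin.castSucc_ne_last i).symm

@[simp] lemma L5_eq (i : Fin 4) : (L5 = i.castSucc) = False := eq_false (L5_ne i)

@[simp] lemma eq_L5 (i : Fin 4) : (i.castSucc = L5) = False := eq_false (L5_ne i).symm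

lemma sum5 (f : Fin 5 → ℂ) : ∑ i, f i = (∑ i : Fin 4, f i.castSucc) + f L5 :=
  Fin.sum_univ_castSucc f

lemma rho5_cl' (Λ a) (i : Fin 4) : rho5 Λ a i.castSucc (L5) = (a i : ℂ) := rho5_cl Λ a i

lemma rho5_lc' (Λ a) (i : Fin 4) : rho5 Λ a (L5) i.castSucc = 0 := rho5_lc Λ a i

lemma rho5_ll' (Λ a) : rho5 Λ a (L5) (L5) = 1 := rho5_ll Λ a

lemma mP_pr' (i j k l : Fin 5) : mP (pr i j) (pr k l)
    = eta5 i j * if k = L5 ∧ l = L5 then 1 else 0 := mP_pr i j k l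

lemma eta5_cc (m n : Fin 4) : eta5 m.castSucc n.castSucc = eta4 m n := by
  fin_cases m <;> fin_cases n <;> simp [eta5, eta4]

lemma eta5_l (m) : eta5 (L5) m = 0 := by
  change eta5 4 m = 0
  simp [eta5]

lemma eta5_r (m) : eta5 m (L5) = 0 := by
  change eta5 m 4 = 0
  simp [eta5]; tauto

lemma lin_indep :
    LinearIndependent ℂ ![(1 : Matrix (Fin (5 * 5)) (Fin (5 * 5)) ℂ), tau5, mP] := by
  rw [Fintype.linearIndependent_iff]
  intro c hc
  simp only [Fin.sum_univ_three, Matrix.cons_val_zero, Matrix.cons_val_one,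
    Matrix.cons_val] at hc
  have e : ∀ i j k l : Fin 5, c 0 * (if i = k ∧ j = l then 1 else 0)
      + c 1 * (if i = l ∧ j = k then 1 else 0)
      + c 2 * (eta5 i j * if k = 4 ∧ l = 4 then 1 else 0) = 0 := by
    intro i j k l
    have := congrFun (congrFun hc (pr i j)) (pr k l)
    simpa only [Matrix.add_apply, Matrix.smul_apply, one_pr, tau_pr, mP_pr, smul_eq_mul,
      Matrix.zero_apply] using this
  have e0 := e 0 1 0 1
  have e1 := e 0 1 1 0
  have e2 := e 0 0 4 4
  simp [eta5] at e0 e1 e2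
  intro i
  fin_cases i
  exacts [e0, e1, e2]

/-- The Lorentz matrices coming from `SL(2,ℂ)`. -/
def Good (Λ : Matrix (Fin 4) (Fin 4) ℝ) : Prop :=
  ∃ g : Matrix (Fin 2) (Fin 2) ℂ, g.det = 1 ∧ IsLorentzPair g Λ

lemma good_s1 : Good (Matrix.diagonal ![1, 1, -1, -1]) := by
  refine ⟨!![0, I; I, 0], by simp [Matrix.det_fin_two], ?_⟩
  intro x
  ext i j
  fin_cases i <;> fin_cases j <;>
    simp [Fin.sum_univ_four, pauli, Matrix.mulVec_diagonal, Matrix.mul_apply] <;>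
    grind [Complex.I_mul_I]

lemma good_s3 : Good (Matrix.diagonal ![1, -1, -1, 1]) := by
  refine ⟨!![I, 0; 0, -I], by simp [Matrix.det_fin_two], ?_⟩
  intro x
  ext i j
  fin_cases i <;> fin_cases j <;>
    simp [Fin.sum_univ_four, pauli, Matrix.mulVec_diagonal, Matrix.mul_apply] <;>
    grind [Complex.I_mul_I]

lemma good_b1 : Good !![17/8, 15/8, 0, 0; 15/8, 17/8, 0, 0; 0, 0, 1, 0; 0, 0, 0, 1] := by
  refine ⟨!![5/4, 3/4; 3/4, 5/4], by norm_num [Matrix.det_fin_two], ?_⟩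
  intro x
  ext i j
  fin_cases i <;> fin_cases j <;>
    simp [Fin.sum_univ_four, pauli, Matrix.mulVec, dotProduct, Matrix.mul_apply,
      Complex.conj_ofNat] <;>
    grind [Complex.I_mul_I]

lemma good_b2 : Good !![17/8, 0, 15/8, 0; 0, 1, 0, 0; 15/8, 0, 17/8, 0; 0, 0, 0, 1] := by
  refine ⟨!![5/4, -(3/4*I); 3/4*I, 5/4], ?_, ?_⟩
  · simp [Matrix.det_fin_two]
    grind [Complex.I_mul_I]
  intro x
  ext i j
  fin_cases i <;> fin_cases j <;>
    simp [Fin.sum_univ_four, pauli, Matrix.mulVec, dotProduct, Matrix.mul_apply,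
      Complex.conj_ofNat] <;>
    grind [Complex.I_mul_I]

lemma good_b3 : Good !![17/8, 0, 0, 15/8; 0, 1, 0, 0; 0, 0, 1, 0; 15/8, 0, 0, 17/8] := by
  refine ⟨!![2, 0; 0, 1/2], by norm_num [Matrix.det_fin_two], ?_⟩
  intro x
  ext i j
  fin_cases i <;> fin_cases j <;>
    simp [Fin.sum_univ_four, pauli, Matrix.mulVec, dotProduct, Matrix.mul_apply,
      Complex.conj_ofNat] <;>
    grind [Complex.I_mul_I]

lemma inv1 (u : Fin 4 → ℂ) (h : ∀ Λ, Good Λ → ∀ i, u i = ∑ m, (Λ i m : ℂ) * u m) (i) :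
    u i = 0 := by
  have h1 := h _ good_b1
  have h2 := h _ good_b2
  have h3 := h _ good_b3
  have a0 := h1 0
  have a1 := h1 1
  have b0 := h2 0
  have b2 := h2 2
  have c0 := h3 0
  have c3 := h3 3
  simp [Fin.sum_univ_four] at a0 a1 b0 b2 c0 c3
  fin_cases i <;> simp <;> grind

lemma inv2 (M : Fin 4 → Fin 4 → ℂ)
    (h : ∀ Λ, Good Λ → ∀ i j, M i j = ∑ m, ∑ n, (Λ i m : ℂ) * Λ j n * M m n) (i j) :
    M i j = M 0 0 * eta4 i j := by
  have s1 := h _ good_s1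
  have s3 := h _ good_s3
  have a0 := h _ good_b1 0 0
  have b0 := h _ good_b2 0 0
  have c0 := h _ good_b3 0 0
  have off : ∀ i j, i ≠ j → M i j = 0 := by
    intro i j hij
    have t1 := s1 i j
    have t3 := s3 i j
    fin_cases i <;> fin_cases j <;> simp [Fin.sum_univ_four] at hij t1 t3 ⊢ <;> grind
  by_cases hij : i = j
  · subst hij
    simp [Fin.sum_univ_four, off] at a0 b0 c0
    fin_cases i <;> simp [eta4] <;> grind
  · rw [off i j hij]
    simp [eta4, hij]

set_option maxHeartbeats 4000000 in
lemma inv3 (T : Fin 4 → Fin 4 → Fin 4 → ℂ)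
    (h : ∀ Λ, Good Λ → ∀ i j k, ∑ m, T i j m * (Λ m k : ℂ)
      = ∑ m, ∑ n, (Λ i m : ℂ) * Λ j n * T m n k) (i j k) :
    T i j k = 0 := by
  have s1 := h _ good_s1 i j k
  have s3 := h _ good_s3 i j k
  have c := h _ good_b3
  have a := h _ good_b1
  have hc : ∀ p q, (p = 1 ∨ p = 2) → (q = 1 ∨ q = 2) →
      T p q 0 = 0 ∧ T p q 3 = 0 ∧ T p 0 q = 0 ∧ T p 3 q = 0 ∧ T 0 p q = 0 ∧ T 3 p q = 0 := by
    intro p q hp hq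
    have e1 := c p q 0
    have e2 := c p q 3
    have e3 := c p 0 q
    have e4 := c p 3 q
    have e5 := c 0 p q
    have e6 := c 3 p q
    rcases hp with rfl | rfl <;> rcases hq with rfl | rfl <;>
      simp [Fin.sum_univ_four] at e1 e2 e3 e4 e5 e6 <;>
      refine ⟨?_, ?_, ?_, ?_, ?_, ?_⟩ <;> grind
  have ha : T 3 3 0 = 0 ∧ T 3 0 3 = 0 ∧ T 0 3 3 = 0 := by
    have e1 := a 3 3 0
    have e2 := a 3 3 1
    have e3 := a 3 0 3
    have e4 := a 3 1 3
    have e5 := a 0 3 3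
    have e6 := a 1 3 3
    simp [Fin.sum_univ_four] at e1 e2 e3 e4 e5 e6
    refine ⟨?_, ?_, ?_⟩ <;> grind
  have odd : ∀ p q r, ((p = 0 ∧ q = 0 ∧ r = 1) ∨ (p = 0 ∧ q = 1 ∧ r = 0) ∨
      (p = 1 ∧ q = 0 ∧ r = 0) ∨ (p = 1 ∧ q = 1 ∧ r = 1)) → T p q r = 0 := by
    intro p q r hp
    have t := h _ good_s3 p q r
    rcases hp with ⟨rfl, rfl, rfl⟩ | ⟨rfl, rfl, rfl⟩ | ⟨rfl, rfl, rfl⟩ | ⟨rfl, rfl, rfl⟩ <;>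
      simp [Fin.sum_univ_four] at t <;> grind
  have h0 : T 0 0 0 = 0 := by
    have e := a 0 0 0
    have o1 := odd 0 0 1 (by simp)
    have o2 := odd 0 1 0 (by simp)
    have o3 := odd 1 0 0 (by simp)
    have o4 := (hc 1 1 (by simp) (by simp)).1
    simp [Fin.sum_univ_four, o1, o2, o3, o4] at e
    grind
  have h11 := hc 1 1 (by simp) (by simp)
  have h12 := hc 1 2 (by simp) (by simp)
  have h21 := hc 2 1 (by simp) (by simp)
  have h22 := hc 2 2 (by simp) (by simp)
  clear hc odd c a h
  fin_cases i <;> fin_cases j <;> fin_cases k <;>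
    simp [Fin.sum_univ_four] at s1 s3 ⊢ <;> grind

lemma trans_comm (W : Matrix (Fin (5 * 5)) (Fin (5 * 5)) ℂ)
    (H : ∀ Λ, Good Λ → ∀ a : Fin 4 → ℝ,
      W * kron (rho5 Λ a) (rho5 Λ a) = kron (rho5 Λ a) (rho5 Λ a) * W)
    (c : Fin 4) (i j k l : Fin 5) :
    (if l = L5 then W (pr i j) (pr k c.castSucc) else 0)
      + (if k = L5 then W (pr i j) (pr c.castSucc l) else 0)
    = (if i = c.castSucc then W (pr (L5) j) (pr k l) else 0)
      + (if j = c.castSucc then W (pr i (L5)) (pr k l) else 0) := by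
  have hg : Good 1 := ⟨1, by simp, pair_one⟩
  have hR : ∀ t : ℝ, ∀ m k : Fin 5, rho5 1 (Pi.single c t) m k
      = (if m = k then 1 else 0) + (t : ℂ) * ((if m = c.castSucc then 1 else 0)
        * (if k = L5 then 1 else 0)) := by
    intro t m k
    refine five_cases ?_ (fun m => ?_) m <;> refine five_cases ?_ (fun k => ?_) k
    · rw [rho5_ll']; simp
    · rw [rho5_lc']; simp
    · rw [rho5_cl']; simp [Pi.single_apply]; split_ifs <;> simp
    · rw [rho5_cc]; simp [Matrix.one_apply]; split_ifs <;> simp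
  have e : ∀ t : ℝ, W (pr i j) (pr k l)
     + t * ((if l = L5 then 1 else 0) * W (pr i j) (pr k c.castSucc)
      + (if k = L5 then 1 else 0) * W (pr i j) (pr c.castSucc l))
     + t ^ 2 * ((if k = L5 then 1 else 0) * (if l = L5 then 1 else 0)
        * W (pr i j) (pr c.castSucc c.castSucc))
    = W (pr i j) (pr k l)
     + t * ((if i = c.castSucc then 1 else 0) * W (pr (L5) j) (pr k l)
      + (if j = c.castSucc then 1 else 0) * W (pr i (L5)) (pr k l))
     + t ^ 2 * ((if i = c.castSucc then 1 else 0) * (if j = c.castSucc then 1 else 0)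
        * W (pr (L5) (L5)) (pr k l)) := by
    intro t
    have h := (comm_iff _ _).1 (H 1 hg (Pi.single c t)) i j k l
    simp only [hR] at h
    generalize (if l = L5 then (1 : ℂ) else 0) = fl at *
    generalize (if k = L5 then (1 : ℂ) else 0) = fk at *
    generalize (if i = c.castSucc then (1 : ℂ) else 0) = ei at *
    generalize (if j = c.castSucc then (1 : ℂ) else 0) = ej at *
    simp only [mul_add, add_mul, Finset.sum_add_distrib, ite_mul, mul_ite, one_mul, zero_mul,
      mul_one, mul_zero, Finset.sum_ite_eq, Finset.sum_ite_eq', Finset.mem_univ, if_true,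
      Finset.sum_ite_irrel, Finset.sum_const_zero] at h
    linear_combination h
  have e1 := e 1
  have e2 := e (-1)
  push_cast at e1 e2
  simp only [boole_mul] at e1 e2
  linear_combination (e1 - e2) / 2

set_option maxHeartbeats 4000000 in
lemma forward (W : Matrix (Fin (5 * 5)) (Fin (5 * 5)) ℂ)
    (H : ∀ Λ, Good Λ → ∀ a : Fin 4 → ℝ,
      W * kron (rho5 Λ a) (rho5 Λ a) = kron (rho5 Λ a) (rho5 Λ a) * W) :
    ∃ x y z : ℂ,
        W = x • (1 : Matrix (Fin (5 * 5)) (Fin (5 * 5)) ℂ) + y • tau5 + z • mP := by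
  have hT := trans_comm W H
  have hL : ∀ Λ, Good Λ → ∀ i j k l,
      ∑ m, ∑ n, W (pr i j) (pr m n) * (rho5 Λ 0 m k * rho5 Λ 0 n l)
        = ∑ m, ∑ n, rho5 Λ 0 i m * rho5 Λ 0 j n * W (pr m n) (pr k l) :=
    fun Λ hΛ => (comm_iff _ _).1 (H Λ hΛ 0)
  have ex2 : ∀ a b : Fin 4, ∃ c, c ≠ a ∧ c ≠ b := by decide
  have ex1 : ∀ a : Fin 4, ∃ c, c ≠ a := by decide
  -- columns in V ⊗ V
  have z1 : ∀ k l : Fin 4, ∀ j, W (pr (L5) j) (pr k.castSucc l.castSucc) = 0 := by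
    intro k l j
    obtain ⟨c, hc⟩ : ∃ c : Fin 4, j ≠ c.castSucc := by
      refine five_cases ⟨0, L5_ne 0⟩ (fun j => ?_) j
      obtain ⟨c, hc⟩ := ex1 j
      exact ⟨c, by simpa using hc.symm⟩
    have := hT c c.castSucc j k.castSucc l.castSucc
    simpa [hc] using this.symm
  have z2 : ∀ k l : Fin 4, ∀ i, W (pr i (L5)) (pr k.castSucc l.castSucc) = 0 := by
    intro k l i
    obtain ⟨c, hc⟩ : ∃ c : Fin 4, i ≠ c.castSucc := by
      refine five_cases ⟨0, L5_ne 0⟩ (fun j => ?_) i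
      obtain ⟨c, hc⟩ := ex1 j
      exact ⟨c, by simpa using hc.symm⟩
    have := hT c i c.castSucc k.castSucc l.castSucc
    simpa [hc] using this.symm
  have z3 : ∀ k : Fin 4, W (pr (L5) (L5)) (pr k.castSucc (L5)) = 0 := by
    intro k
    obtain ⟨c⟩ : Nonempty (Fin 4) := ⟨0⟩
    have := hT c L5 c.castSucc k.castSucc (L5)
    simp [z1] at this
    exact this.symm
  have z4 : ∀ k : Fin 4, W (pr (L5) (L5)) (pr (L5) k.castSucc) = 0 := by
    intro k
    obtain ⟨c⟩ : Nonempty (Fin 4) := ⟨0⟩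
    have := hT c L5 c.castSucc (L5) k.castSucc
    simp [z1] at this
    exact this.symm
  have f1 : ∀ i j k c : Fin 4, W (pr i.castSucc j.castSucc) (pr k.castSucc c.castSucc)
      = (if i = c then W (pr (L5) j.castSucc) (pr k.castSucc (L5)) else 0)
      + (if j = c then W (pr i.castSucc (L5)) (pr k.castSucc (L5)) else 0) := by
    intro i j k c
    simpa using hT c i.castSucc j.castSucc k.castSucc (L5)
  have f2 : ∀ i j c l : Fin 4, W (pr i.castSucc j.castSucc) (pr c.castSucc l.castSucc)
      = (if i = c then W (pr (L5) j.castSucc) (pr (L5) l.castSucc) else 0)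
      + (if j = c then W (pr i.castSucc (L5)) (pr (L5) l.castSucc) else 0) := by
    intro i j c l
    simpa using hT c i.castSucc j.castSucc (L5) l.castSucc
  have f3 : ∀ c : Fin 4, ∀ i j : Fin 5, W (pr i j) (pr (L5) c.castSucc)
      + W (pr i j) (pr c.castSucc (L5))
      = (if i = c.castSucc then W (pr (L5) j) (pr (L5) (L5)) else 0)
      + (if j = c.castSucc then W (pr i (L5)) (pr (L5) (L5)) else 0) := by
    intro c i j
    simpa using hT c i j (L5) (L5)
  obtain ⟨P, hP⟩ : ∃ P : Fin 4 → Fin 4 → ℂ, ∀ i k, P i k =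
    W (pr i.castSucc (L5)) (pr k.castSucc (L5)) := ⟨_, fun _ _ => rfl⟩
  obtain ⟨Q, hQ⟩ : ∃ P : Fin 4 → Fin 4 → ℂ, ∀ i k, P i k =
    W (pr (L5) i.castSucc) (pr k.castSucc (L5)) := ⟨_, fun _ _ => rfl⟩
  obtain ⟨R, hR⟩ : ∃ P : Fin 4 → Fin 4 → ℂ, ∀ i k, P i k =
    W (pr i.castSucc (L5)) (pr (L5) k.castSucc) := ⟨_, fun _ _ => rfl⟩
  obtain ⟨S, hS⟩ : ∃ P : Fin 4 → Fin 4 → ℂ, ∀ i k, P i k =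
    W (pr (L5) i.castSucc) (pr (L5) k.castSucc) := ⟨_, fun _ _ => rfl⟩
  have f4 : ∀ i j k l : Fin 4, (if i = l then Q j k else 0) + (if j = l then P i k else 0)
      = (if i = k then S j l else 0) + (if j = k then R i l else 0) := by
    intro i j k l
    rw [hP, hQ, hR, hS, ← f1, ← f2]
  have oP : ∀ i k, i ≠ k → P i k = 0 := by
    intro i k h
    obtain ⟨l, h1, h2⟩ := ex2 i k
    simpa [h, h1, h2, h1.symm] using f4 i l k l
  have oQ : ∀ j k, j ≠ k → Q j k = 0 := by
    intro i k h
    obtain ⟨l, h1, h2⟩ := ex2 i k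
    simpa [h, h1, h2, h1.symm] using f4 l i k l
  have oS : ∀ j l, j ≠ l → S j l = 0 := by
    intro j l h
    obtain ⟨k, h1, h2⟩ := ex2 j l
    simpa [h, h1, h2, h1.symm] using (f4 k j k l).symm
  have oR : ∀ j l, j ≠ l → R j l = 0 := by
    intro j l h
    obtain ⟨k, h1, h2⟩ := ex2 j l
    simpa [h, h1, h2, h1.symm] using (f4 j k k l).symm
  have dPS : ∀ k l, k ≠ l → P k k = S l l := by
    intro k l h
    simpa [h, h.symm] using f4 k l k l
  have dQR : ∀ k l, k ≠ l → Q k k = R l l := by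
    intro k l h
    simpa [h, h.symm] using f4 l k k l
  have cS : ∀ l, S l l = P 0 0 := by
    intro l
    obtain ⟨k, h1, h2⟩ := ex2 0 l
    by_cases h : l = 0
    · subst h
      rw [← dPS 1 0 (by decide), dPS 1 2 (by decide), dPS 0 2 (by decide)]
    · exact (dPS 0 l (Ne.symm h)).symm
  have cP : ∀ l, P l l = P 0 0 := by
    intro l
    obtain ⟨k, h1, h2⟩ := ex2 0 l
    rw [dPS l k h2.symm, cS]
  have cR : ∀ l, R l l = Q 0 0 := by
    intro l
    by_cases h : l = 0
    · subst h
      rw [← dQR 1 0 (by decide), dQR 1 2 (by decide), dQR 0 2 (by decide)]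
    · exact (dQR 0 l (Ne.symm h)).symm
  have cQ : ∀ l, Q l l = Q 0 0 := by
    intro l
    obtain ⟨k, h1, h2⟩ := ex2 0 l
    rw [dQR l k h2.symm, cR]
  have eP : ∀ i k, P i k = if i = k then P 0 0 else 0 := by
    intro i k
    split_ifs with h
    · rw [h, cP]
    · exact oP i k h
  have eQ : ∀ i k, Q i k = if i = k then Q 0 0 else 0 := by
    intro i k
    split_ifs with h
    · rw [h, cQ]
    · exact oQ i k h
  have eR : ∀ i k, R i k = if i = k then Q 0 0 else 0 := by
    intro i k
    split_ifs with h
    · rw [h, cR]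
    · exact oR i k h
  have eS : ∀ i k, S i k = if i = k then P 0 0 else 0 := by
    intro i k
    split_ifs with h
    · rw [h, cS]
    · exact oS i k h
  have ht : W (pr (L5) (L5)) (pr (L5) (L5)) = P 0 0 + Q 0 0 := by
    have := f3 0 (Fin.castSucc 0) (L5)
    rw [← hP, ← hR, cR, if_pos rfl, if_neg (L5_ne _)] at this
    linear_combination -this
  -- Lorentz invariants
  have u1 : ∀ i : Fin 4, W (pr i.castSucc (L5)) (pr (L5) (L5)) = 0 := by
    refine inv1 (fun i => W (pr i.castSucc (L5)) (pr (L5) (L5))) ?_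
    intro Λ hΛ i
    have := hL Λ hΛ i.castSucc (L5) (L5) (L5)
    simp only [sum5, rho5_cc, rho5_cl', rho5_lc', rho5_ll'] at this
    simpa using this
  have u2 : ∀ i : Fin 4, W (pr (L5) i.castSucc) (pr (L5) (L5)) = 0 := by
    refine inv1 (fun i => W (pr (L5) i.castSucc) (pr (L5) (L5))) ?_
    intro Λ hΛ i
    have := hL Λ hΛ (L5) i.castSucc (L5) (L5)
    simp only [sum5, rho5_cc, rho5_cl', rho5_lc', rho5_ll'] at this
    simpa using this
  have hM : ∀ i j : Fin 4, W (pr i.castSucc j.castSucc) (pr (L5) (L5))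
      = W (pr (Fin.castSucc 0) (Fin.castSucc 0)) (pr (L5) (L5)) * eta4 i j := by
    refine inv2 (fun i j => W (pr i.castSucc j.castSucc) (pr (L5) (L5))) ?_
    intro Λ hΛ i j
    have := hL Λ hΛ i.castSucc j.castSucc (L5) (L5)
    simp only [sum5, rho5_cc, rho5_cl', rho5_lc', rho5_ll'] at this
    simpa using this
  have hA : ∀ i j k : Fin 4, W (pr i.castSucc j.castSucc) (pr k.castSucc (L5)) = 0 := by
    refine inv3 (fun i j k => W (pr i.castSucc j.castSucc) (pr k.castSucc (L5))) ?_
    intro Λ hΛ i j k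
    have := hL Λ hΛ i.castSucc j.castSucc k.castSucc (L5)
    simp only [sum5, rho5_cc, rho5_cl', rho5_lc', rho5_ll'] at this
    simpa using this
  have hB : ∀ i j k : Fin 4, W (pr i.castSucc j.castSucc) (pr (L5) k.castSucc) = 0 := by
    refine inv3 (fun i j k => W (pr i.castSucc j.castSucc) (pr (L5) k.castSucc)) ?_
    intro Λ hΛ i j k
    have := hL Λ hΛ i.castSucc j.castSucc (L5) k.castSucc
    simp only [sum5, rho5_cc, rho5_cl', rho5_lc', rho5_ll'] at this
    simpa using this
  refine ⟨P 0 0, Q 0 0,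
    W (pr (Fin.castSucc 0) (Fin.castSucc 0)) (pr (L5) (L5)), ?_⟩
  ext p q
  obtain ⟨i, j, rfl⟩ := pr_surj p
  obtain ⟨k, l, rfl⟩ := pr_surj q
  simp only [Matrix.add_apply, Matrix.smul_apply, one_pr, tau_pr, mP_pr', smul_eq_mul]
  generalize hz : W (pr (Fin.castSucc 0) (Fin.castSucc 0)) (pr (L5) (L5)) = z at *
  generalize P 0 0 = p at *
  generalize Q 0 0 = q at *
  refine five_cases ?_ (fun i => ?_) i <;> refine five_cases ?_ (fun j => ?_) j <;>
  refine five_cases ?_ (fun k => ?_) k <;> refine five_cases ?_ (fun l => ?_) l <;>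
  simp only [f1, ht, u1, u2, hM, hA, hB, z1, z2, z3, z4, ← hP, ← hQ, ← hR, ← hS,
    eta5_cc, eta5_l, eta5_r, eP, eQ, eR, eS] <;>
  simp <;> grind

/-- The commutant of the tensor square of the fundamental 5-dimensional representation
of the classical Poincaré group is exactly the span of `1₂₅`, `τ₅` and `m_P`, and these
three matrices are linearly independent. -/
theorem poincare_commutant :
    (∀ W : Matrix (Fin (5 * 5)) (Fin (5 * 5)) ℂ,
      (∀ g : Matrix (Fin 2) (Fin 2) ℂ, g.det = 1 →
        ∀ Λ : Matrix (Fin 4) (Fin 4) ℝ, IsLorentzPair g Λ →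
        ∀ a : Fin 4 → ℝ,
          W * kron (rho5 Λ a) (rho5 Λ a) = kron (rho5 Λ a) (rho5 Λ a) * W) ↔
      (∃ x y z : ℂ,
        W = x • (1 : Matrix (Fin (5 * 5)) (Fin (5 * 5)) ℂ) + y • tau5 + z • mP)) ∧
    LinearIndependent ℂ ![(1 : Matrix (Fin (5 * 5)) (Fin (5 * 5)) ℂ), tau5, mP] := by
  refine ⟨fun W => ⟨fun H => ?_, ?_⟩, lin_indep⟩
  · exact forward W (fun Λ ⟨g, hg, hp⟩ a => H g hg Λ hp a)
  · rintro ⟨x, y, z, rfl⟩ g hg Λ hp a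
    simp only [add_mul, mul_add, Matrix.smul_mul, Matrix.mul_smul, Matrix.one_mul,
      Matrix.mul_one, tau_comm, mP_comm hg hp]
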